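/- Let (H,A,C) be a Doi-Hopf datum, θ ∈ V_3, and M a right-left Doi-Hopf module. Then the map ν_M : C⊗M → M defined by ν_M(c⊗m) = Σ m_{<0>} · θ(c ⊗ m_{<-1>}) is right A-linear, where C⊗M carries the right A-action (c⊗m)·a = Σ c·a_{<-1>} ⊗ m·a_{<0>}, and is left C-colinear, i.e. ρ_M(ν_M(c⊗m)) = Σ c_(1) ⊗ ν_M(c_(2)⊗m) for all c∈C, m∈M. -/

import Mathlib

/-!
Both identities are Sweedler computations.

*Linearity.* By compatibility of the coaction with the action, both sides of the identity equal
`Σ m_{<0>} · (a_{<0>} θ(c·a_{<-2>} ⊗ m_{<-1>}·a_{<-1>}))`; the right-hand side takes this form by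
condition (a) of `V₃`.  Finite decompositions of `ρ_M m` and of the (iterated) coaction of `a`
reduce this to a comparison of finite sums.

*Colinearity.* Compatibility and coassociativity of `ρ_M` turn `ρ_M(ν_M(c ⊗ m))` into
`Σ d_(2)·θ(c ⊗ d_(1))_{<-1>} ⊗ n·θ(c ⊗ d_(1))_{<0>}`, where `ρ_M m = Σ d ⊗ n`; condition (b) of
`V₃`, with `id ⊗ (n · _)` applied to it, rewrites this as `Σ c_(1) ⊗ n·θ(c_(2) ⊗ d)`.
-/

open TensorProduct

noncomputable section

/-- A Doi-Hopf datum `(H, A, C)`: `H` is a `k`-bialgebra, `A` is a left `H`-comodule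
algebra (with coaction `ρ`), and `C` is a right `H`-module coalgebra (with action `act`). -/
structure DoiHopfDatum (k H A C : Type*) [CommRing k] [Ring H] [Bialgebra k H]
    [Ring A] [Algebra k A] [AddCommGroup C] [Module k C] [Coalgebra k C] where
  /-- the coaction `ρ_A : A → H ⊗ A`, `ρ a = Σ a_{<-1>} ⊗ a_{<0>}` -/
  ρ : A →ₗ[k] H ⊗[k] A
  ρ_coassoc : ∀ a : A,
    (TensorProduct.assoc k H H A)
        ((TensorProduct.map (Coalgebra.comul (R := k)) LinearMap.id) (ρ a))
      = (TensorProduct.map LinearMap.id ρ) (ρ a)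
  ρ_counit : ∀ a : A,
    (TensorProduct.lid k A)
        ((TensorProduct.map (Coalgebra.counit (R := k)) LinearMap.id) (ρ a)) = a
  ρ_mul : ∀ a b : A, ρ (a * b) = ρ a * ρ b
  ρ_one : ρ 1 = 1
  /-- the right `H`-action on `C`, written `act c h = c · h` -/
  act : C →ₗ[k] H →ₗ[k] C
  act_one : ∀ c : C, act c 1 = c
  act_mul : ∀ (c : C) (g h : H), act (act c g) h = act c (g * h)
  comul_act : ∀ (c : C) (h : H),
    Coalgebra.comul (R := k) (act c h)
      = (TensorProduct.map (TensorProduct.lift act) (TensorProduct.lift act))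
          ((TensorProduct.tensorTensorTensorComm k C C H H)
            (Coalgebra.comul (R := k) c ⊗ₜ[k] Coalgebra.comul (R := k) h))
  counit_act : ∀ (c : C) (h : H),
    Coalgebra.counit (R := k) (act c h)
      = Coalgebra.counit (R := k) c * Coalgebra.counit (R := k) h

namespace DoiHopfDatum

variable {k H A C : Type*} [CommRing k] [Ring H] [Bialgebra k H]
    [Ring A] [Algebra k A] [AddCommGroup C] [Module k C] [Coalgebra k C]
variable (D : DoiHopfDatum k H A C)

/-- The action `C ⊗ H → C` as a linear map on the tensor product. -/
def actL : C ⊗[k] H →ₗ[k] C := TensorProduct.lift D.act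

/-- The iterated coaction `a ↦ Σ (a_{<-2>} ⊗ a_{<-1>}) ⊗ a_{<0>}`. -/
def ρ2 : A →ₗ[k] (H ⊗[k] H) ⊗[k] A :=
  (TensorProduct.assoc k H H A).symm.toLinearMap ∘ₗ
    (TensorProduct.map LinearMap.id D.ρ) ∘ₗ D.ρ

/-- The simultaneous action of `H ⊗ H` on `C ⊗ C`. -/
def act2 : (C ⊗[k] C) ⊗[k] (H ⊗[k] H) →ₗ[k] C ⊗[k] C :=
  (TensorProduct.map D.actL D.actL) ∘ₗ
    (TensorProduct.tensorTensorTensorComm k C C H H).toLinearMap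

/-- The right `A`-action on `C ⊗ A`: `(c ⊗ b) · a = Σ c·a_{<-1>} ⊗ b·a_{<0>}`. -/
def rActCA : (C ⊗[k] A) ⊗[k] A →ₗ[k] C ⊗[k] A :=
  (TensorProduct.map D.actL (LinearMap.mul' k A)) ∘ₗ
    (TensorProduct.tensorTensorTensorComm k C A H A).toLinearMap ∘ₗ
    (TensorProduct.map LinearMap.id D.ρ)

/-- The right-hand side of condition (a) of `V₃`:
`(c ⊗ d) ⊗ a ↦ Σ a_{<0>} * θ(c·a_{<-2>} ⊗ d·a_{<-1>})`. -/
def V3aRHS (θ : C ⊗[k] C →ₗ[k] A) : (C ⊗[k] C) ⊗[k] A →ₗ[k] A :=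
  (LinearMap.mul' k A) ∘ₗ (TensorProduct.comm k A A).toLinearMap ∘ₗ
    (TensorProduct.map θ LinearMap.id) ∘ₗ
    (TensorProduct.map D.act2 LinearMap.id) ∘ₗ
    (TensorProduct.assoc k (C ⊗[k] C) (H ⊗[k] H) A).symm.toLinearMap ∘ₗ
    (TensorProduct.map LinearMap.id D.ρ2)

/-- The left-hand side of condition (b) of `V₃`: `c ⊗ d ↦ Σ c_(1) ⊗ θ(c_(2) ⊗ d)`. -/
def V3bLHS (_D : DoiHopfDatum k H A C) (θ : C ⊗[k] C →ₗ[k] A) : C ⊗[k] C →ₗ[k] C ⊗[k] A :=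
  (TensorProduct.map LinearMap.id θ) ∘ₗ
    (TensorProduct.assoc k C C C).toLinearMap ∘ₗ
    (TensorProduct.map (Coalgebra.comul (R := k)) LinearMap.id)

/-- The right-hand side of condition (b) of `V₃`:
`c ⊗ d ↦ Σ d_(2)·θ(c ⊗ d_(1))_{<-1>} ⊗ θ(c ⊗ d_(1))_{<0>}`. -/
def V3bRHS (θ : C ⊗[k] C →ₗ[k] A) : C ⊗[k] C →ₗ[k] C ⊗[k] A :=
  (TensorProduct.map D.actL LinearMap.id) ∘ₗ
    (TensorProduct.assoc k C H A).symm.toLinearMap ∘ₗ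
    (TensorProduct.comm k (H ⊗[k] A) C).toLinearMap ∘ₗ
    (TensorProduct.map D.ρ LinearMap.id) ∘ₗ
    (TensorProduct.map θ LinearMap.id) ∘ₗ
    (TensorProduct.assoc k C C C).symm.toLinearMap ∘ₗ
    (TensorProduct.map LinearMap.id (Coalgebra.comul (R := k)))

/-- `θ : C ⊗ C → A` belongs to `V₃`. -/
def IsV3 (θ : C ⊗[k] C →ₗ[k] A) : Prop :=
  (∀ (c d : C) (a : A), θ (c ⊗ₜ[k] d) * a = D.V3aRHS θ ((c ⊗ₜ[k] d) ⊗ₜ[k] a)) ∧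
    D.V3bLHS θ = D.V3bRHS θ

/-- `θ` is normalized: `Σ θ(c_(1) ⊗ c_(2)) = ε(c)1_A`. -/
def IsNormalizedV3 (_D : DoiHopfDatum k H A C) (θ : C ⊗[k] C →ₗ[k] A) : Prop :=
  ∀ c : C, θ (Coalgebra.comul (R := k) c)
    = algebraMap k A (Coalgebra.counit (R := k) c)

/-- An `A`-integral `γ : C → Hom(C,A)` for the Doi-Hopf datum: its uncurried form
lies in `V₃`. -/
def IsAIntegral (γ : C →ₗ[k] (C →ₗ[k] A)) : Prop :=
  D.IsV3 (TensorProduct.lift γ)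

/-- A total `A`-integral: a normalized `A`-integral. -/
def IsTotalAIntegral (γ : C →ₗ[k] (C →ₗ[k] A)) : Prop :=
  D.IsAIntegral γ ∧ D.IsNormalizedV3 (TensorProduct.lift γ)

end DoiHopfDatum

/-- A right-left Doi-Hopf module over the Doi-Hopf datum `D`: a right `A`-module and
left `C`-comodule `M` satisfying `ρ_M(m·a) = Σ m_{<-1>}·a_{<-1>} ⊗ m_{<0>}·a_{<0>}`. -/
structure DHModule {k H A C : Type*} [CommRing k] [Ring H] [Bialgebra k H]
    [Ring A] [Algebra k A] [AddCommGroup C] [Module k C] [Coalgebra k C]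
    (D : DoiHopfDatum k H A C) (M : Type*) [AddCommGroup M] [Module k M] where
  /-- the right `A`-action on `M` -/
  sm : M →ₗ[k] A →ₗ[k] M
  sm_one : ∀ m : M, sm m 1 = m
  sm_mul : ∀ (m : M) (a b : A), sm (sm m a) b = sm m (a * b)
  /-- the left `C`-coaction `ρ_M : M → C ⊗ M` -/
  cρ : M →ₗ[k] C ⊗[k] M
  cρ_coassoc : ∀ m : M,
    (TensorProduct.assoc k C C M)
        ((TensorProduct.map (Coalgebra.comul (R := k)) LinearMap.id) (cρ m))
      = (TensorProduct.map LinearMap.id cρ) (cρ m)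
  cρ_counit : ∀ m : M,
    (TensorProduct.lid k M)
        ((TensorProduct.map (Coalgebra.counit (R := k)) LinearMap.id) (cρ m)) = m
  compat : ∀ (m : M) (a : A),
    cρ (sm m a)
      = (TensorProduct.map D.actL (TensorProduct.lift sm))
          ((TensorProduct.tensorTensorTensorComm k C M H A)
            (cρ m ⊗ₜ[k] D.ρ a))

namespace DoiHopfDatum

variable {k H A C : Type*} [CommRing k] [Ring H] [Bialgebra k H]
    [Ring A] [Algebra k A] [AddCommGroup C] [Module k C] [Coalgebra k C]
variable (D : DoiHopfDatum k H A C)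

/-- The natural transformation attached to `θ : C ⊗ C → A`:
`ν_M (c ⊗ m) = Σ m_{<0>} · θ(c ⊗ m_{<-1>})`. -/
def nuMap (θ : C ⊗[k] C →ₗ[k] A) {M : Type*} [AddCommGroup M] [Module k M]
    (DM : DHModule D M) : C ⊗[k] M →ₗ[k] M :=
  (TensorProduct.lift DM.sm) ∘ₗ (TensorProduct.comm k A M).toLinearMap ∘ₗ
    (TensorProduct.map θ LinearMap.id) ∘ₗ
    (TensorProduct.assoc k C C M).symm.toLinearMap ∘ₗ
    (TensorProduct.map LinearMap.id DM.cρ)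

/-- The right `A`-action on `C ⊗ M`: `(c ⊗ m) · a = Σ c·a_{<-1>} ⊗ m·a_{<0>}`. -/
def actCM {M : Type*} [AddCommGroup M] [Module k M] (DM : DHModule D M) :
    (C ⊗[k] M) ⊗[k] A →ₗ[k] C ⊗[k] M :=
  (TensorProduct.map D.actL (TensorProduct.lift DM.sm)) ∘ₗ
    (TensorProduct.tensorTensorTensorComm k C M H A).toLinearMap ∘ₗ
    (TensorProduct.map LinearMap.id D.ρ)

end DoiHopfDatum

namespace DoiHopfDatum

variable {k H A C : Type*} [CommRing k] [Ring H] [Bialgebra k H]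
    [Ring A] [Algebra k A] [AddCommGroup C] [Module k C] [Coalgebra k C]
    {D : DoiHopfDatum k H A C} {θ : C ⊗[k] C →ₗ[k] A}
    {M : Type*} [AddCommGroup M] [Module k M]

theorem nuMap_right_linear (hθ : D.IsV3 θ) (DM : DHModule D M) (c : C) (m : M) (a : A) :
    D.nuMap θ DM (D.actCM DM ((c ⊗ₜ[k] m) ⊗ₜ[k] a))
      = DM.sm (D.nuMap θ DM (c ⊗ₜ[k] m)) a := by
  obtain ⟨S, hS⟩ := TensorProduct.exists_finset (DM.cρ m)
  obtain ⟨T, hT⟩ := TensorProduct.exists_finset (D.ρ a)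
  choose U hU using fun b : A => TensorProduct.exists_finset (D.ρ b)
  have hR : DM.sm (D.nuMap θ DM (c ⊗ₜ[k] m)) a
      = ∑ i ∈ S, DM.sm i.2 (θ (c ⊗ₜ[k] i.1) * a) := by
    simp [nuMap, hS, TensorProduct.tmul_sum, DM.sm_mul]
  rw [hR]
  simp only [hθ.1]
  have hV : ∀ d : C, D.V3aRHS θ ((c ⊗ₜ[k] d) ⊗ₜ[k] a)
      = ∑ j ∈ T, ∑ l ∈ U j.2, l.2 * θ (D.act c j.1 ⊗ₜ[k] D.act d l.1) := by
    intro d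
    simp [V3aRHS, ρ2, act2, actL, hT, hU, TensorProduct.tmul_sum]
  have hL : D.nuMap θ DM (D.actCM DM ((c ⊗ₜ[k] m) ⊗ₜ[k] a))
      = ∑ j ∈ T, ∑ i ∈ S, ∑ l ∈ U j.2,
          DM.sm i.2 (l.2 * θ (D.act c j.1 ⊗ₜ[k] D.act i.1 l.1)) := by
    simp [nuMap, actCM, actL, hT, hU, hS, DM.compat, TensorProduct.tmul_sum,
      TensorProduct.sum_tmul, DM.sm_mul]
    exact Finset.sum_congr rfl fun _ _ => Finset.sum_comm
  rw [hL, Finset.sum_comm]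
  simp only [hV, map_sum]

/-- The map `d ⊗ y ↦ y · θ(c ⊗ d)` for the right `A`-action on `C ⊗ M`. -/
def coactAux (θ : C ⊗[k] C →ₗ[k] A) (DM : DHModule D M) (c : C) :
    C ⊗[k] (C ⊗[k] M) →ₗ[k] C ⊗[k] M :=
  (D.actCM DM) ∘ₗ (TensorProduct.map LinearMap.id (θ ∘ₗ TensorProduct.mk k C C c)) ∘ₗ
    (TensorProduct.comm k C (C ⊗[k] M)).toLinearMap

theorem coactAux_assoc_tmul (DM : DHModule D M) (c d : C) (n : M) :
    coactAux θ DM c (TensorProduct.assoc k C C M (Coalgebra.comul (R := k) d ⊗ₜ[k] n))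
      = TensorProduct.map LinearMap.id (DM.sm n) (D.V3bRHS θ (c ⊗ₜ[k] d)) := by
  obtain ⟨S, hS⟩ := TensorProduct.exists_finset (Coalgebra.comul (R := k) d)
  choose U hU using fun b : A => TensorProduct.exists_finset (D.ρ b)
  simp [coactAux, actCM, V3bRHS, actL, hS, hU, TensorProduct.tmul_sum, TensorProduct.sum_tmul]

theorem nuMap_colinear (hθ : D.IsV3 θ) (DM : DHModule D M) (c : C) (m : M) :
    DM.cρ (D.nuMap θ DM (c ⊗ₜ[k] m))
      = TensorProduct.map LinearMap.id (D.nuMap θ DM)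
          (TensorProduct.assoc k C C M
            (TensorProduct.map (Coalgebra.comul (R := k)) LinearMap.id (c ⊗ₜ[k] m))) := by
  obtain ⟨S, hS⟩ := TensorProduct.exists_finset (DM.cρ m)
  obtain ⟨T, hT⟩ := TensorProduct.exists_finset (Coalgebra.comul (R := k) c)
  have hL : DM.cρ (D.nuMap θ DM (c ⊗ₜ[k] m))
      = coactAux θ DM c (TensorProduct.map LinearMap.id DM.cρ (DM.cρ m)) := by
    simp [nuMap, coactAux, actCM, hS, TensorProduct.tmul_sum, DM.compat]
  rw [hL, ← DM.cρ_coassoc, hS]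
  simp only [map_sum, TensorProduct.map_tmul, LinearMap.id_apply, coactAux_assoc_tmul, ← hθ.2]
  simp only [V3bLHS, nuMap, hS, hT, LinearMap.comp_apply, LinearEquiv.coe_coe,
    TensorProduct.map_tmul, LinearMap.id_apply, TensorProduct.tmul_sum, TensorProduct.sum_tmul,
    map_sum, TensorProduct.assoc_tmul, TensorProduct.assoc_symm_tmul, TensorProduct.comm_tmul,
    TensorProduct.lift.tmul]
  exact Finset.sum_comm

end DoiHopfDatum

/-- For `θ ∈ V₃` and a Doi-Hopf module `M`, the map
`ν_M(c ⊗ m) = Σ m_{<0>} · θ(c ⊗ m_{<-1>})` is right `A`-linear and left `C`-colinear. -/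
theorem nuMap_right_linear_and_colinear
    {k H A C : Type*} [CommRing k] [Ring H] [Bialgebra k H]
    [Ring A] [Algebra k A] [AddCommGroup C] [Module k C] [Coalgebra k C]
    (D : DoiHopfDatum k H A C) (θ : C ⊗[k] C →ₗ[k] A) (hθ : D.IsV3 θ)
    {M : Type*} [AddCommGroup M] [Module k M] (DM : DHModule D M) :
    (∀ (c : C) (m : M) (a : A),
        D.nuMap θ DM (D.actCM DM ((c ⊗ₜ[k] m) ⊗ₜ[k] a))
          = DM.sm (D.nuMap θ DM (c ⊗ₜ[k] m)) a) ∧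
    (∀ (c : C) (m : M),
        DM.cρ (D.nuMap θ DM (c ⊗ₜ[k] m))
          = (TensorProduct.map LinearMap.id (D.nuMap θ DM))
              ((TensorProduct.assoc k C C M)
                ((TensorProduct.map (Coalgebra.comul (R := k)) LinearMap.id)
                  (c ⊗ₜ[k] m)))) := by
  exact ⟨DoiHopfDatum.nuMap_right_linear hθ DM, DoiHopfDatum.nuMap_colinear hθ DM⟩
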